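/- Let p ∈ (0,1). There is a universal constant Δ > 0 such that for every α ∈ ℝ^d with entries in [0,1] and at least one entry equal to 1, if X₁, X₂, X₃ are i.i.d. N(0,D_α) and E_p = {⟨X₁,X₂⟩ ≥ t_{p,α}, ⟨X₁,X₃⟩ ≥ t_{p,α}, ⟨X₂,X₃⟩ ≥ t_{p,α}}, then P(E_p) − p³ ≤ Δ·(‖α‖₃/‖α‖₂)³. -/

import Mathlib

open MeasureTheory ProbabilityTheory Real Filter
open scoped Classical ENNReal NNReal

noncomputable section

/-- Euclidean inner product on `Fin d → ℝ`. -/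
def dotp {d : ℕ} (x y : Fin d → ℝ) : ℝ := ∑ i, x i * y i

/-- The `q`-norm of a vector `α ∈ ℝ^d`. -/
def nrm {d : ℕ} (q : ℕ) (α : Fin d → ℝ) : ℝ := (∑ i, α i ^ q) ^ ((1 : ℝ) / q)

/-- The centered Gaussian measure `N(0, D_α)` on `ℝ^d`, `D_α = diag α`. -/
def gaussPi (d : ℕ) (α : Fin d → ℝ) : Measure (Fin d → ℝ) :=
  Measure.pi fun i => gaussianReal 0 (Real.toNNReal (α i))

/-- The law of `n` i.i.d. samples from `N(0, D_α)`. -/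
def sampleMeasure (n d : ℕ) (α : Fin d → ℝ) : Measure (Fin n → Fin d → ℝ) :=
  Measure.pi fun _ => gaussPi d α

/-- `t` is the `p`-th upper quantile of `⟨X₁, X₂⟩` for `X₁, X₂` i.i.d. `N(0, D_α)`. -/
def IsThreshold (d : ℕ) (α : Fin d → ℝ) (p t : ℝ) : Prop :=
  ((gaussPi d α).prod (gaussPi d α)) {xy | t ≤ dotp xy.1 xy.2} = ENNReal.ofReal p

instance (n : ℕ) : MeasurableSpace (SimpleGraph (Fin n)) := ⊤

/-- The anisotropic random geometric graph `G(n, p, α)`, with threshold `t = t_{p,α}`. -/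
def geomGraph (n d : ℕ) (α : Fin d → ℝ) (t : ℝ) : Measure (SimpleGraph (Fin n)) :=
  Measure.map (fun X => SimpleGraph.fromRel fun i j => t ≤ dotp (X i) (X j))
    (sampleMeasure n d α)

/-- The Erdős–Rényi random graph `G(n, p)`. -/
def erGraph (n : ℕ) (p : ℝ) : Measure (SimpleGraph (Fin n)) :=
  Measure.map (fun x => SimpleGraph.fromRel fun i j => x s(i, j) ≤ p)
    (Measure.pi fun _ : Sym2 (Fin n) => volume.restrict (Set.Icc (0 : ℝ) 1))

/-- Total variation distance between two measures. -/
def tvDist {Ω : Type*} [MeasurableSpace Ω] (μ ν : Measure Ω) : ℝ :=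
  ⨆ s : {s : Set Ω // MeasurableSet s}, |(μ s.1).toReal - (ν s.1).toReal|

/-- The probability that three i.i.d. `N(0, D_α)` points form a triangle at threshold `t`. -/
def triangleProb (d : ℕ) (α : Fin d → ℝ) (t : ℝ) : ℝ :=
  ((sampleMeasure 3 d α)
    {X | t ≤ dotp (X 0) (X 1) ∧ t ≤ dotp (X 0) (X 2) ∧ t ≤ dotp (X 1) (X 2)}).toReal

/-!
Given two points `x` and `y`, the pair `(⟨x, Z⟩, ⟨y, Z⟩)` with `Z ∼ N(0, D_α)` is centred Gaussian
with variances `∑ αᵢ xᵢ²`, `∑ αᵢ yᵢ²` and covariance `w = ∑ αᵢ xᵢ yᵢ`. After scaling to `‖α‖₂ = 1`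
it is nearly a standard Gaussian pair, so the probability that `Z` is joined to both `x` and `y`
is the product of the two neighbor probabilities, plus `φ(t)² w`, up to an error quadratic in the
distance of the covariance matrix from the identity.

On the event that `x` and `y` are joined, the product term contributes at most the third moment of
the neighbor probability, which is `p³` up to a variance; the linear term is computed by regressing
`w` on `⟨x, y⟩` for fixed `x` and contributes `∑ αᵢ³`; and the quadratic error has expectation of
order `∑ αᵢ⁴ ≤ ∑ αᵢ³`.
-/

local notation "φ" => gaussianPDFReal 0 1
local notation "γ" => gaussianReal 0 1

/-- The standard normal upper tail `u ↦ ℙ(N(0, 1) ≥ u)`. -/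
def gaussianTail (u : ℝ) : ℝ := (γ).real (Set.Ici u)

section StandardGaussian

lemma gaussianPDFReal_std_eq (x : ℝ) : φ x = (√(2 * π))⁻¹ * rexp (-x ^ 2 / 2) := by
  simp [gaussianPDFReal]

lemma one_add_sq_div_two_mul_gaussianPDFReal_std_le (x : ℝ) :
    (1 + x ^ 2 / 2) * φ x ≤ 1 / 2 := by
  have hexp : (1 + x ^ 2 / 2) * rexp (-x ^ 2 / 2) ≤ 1 := by
    rw [neg_div, exp_neg, ← div_eq_mul_inv, div_le_one (exp_pos _), add_comm]
    exact add_one_le_exp _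
  have hconst : (√(2 * π))⁻¹ ≤ 1 / 2 := by
    rw [one_div]
    exact inv_anti₀ two_pos (le_sqrt_of_sq_le (by nlinarith [pi_gt_three]))
  calc (1 + x ^ 2 / 2) * φ x
      = (√(2 * π))⁻¹ * ((1 + x ^ 2 / 2) * rexp (-x ^ 2 / 2)) := by
        rw [gaussianPDFReal_std_eq]; ring
    _ ≤ (√(2 * π))⁻¹ * 1 := by gcongr
    _ ≤ 1 / 2 := by rwa [mul_one]

lemma gaussianPDFReal_std_le_half (x : ℝ) : φ x ≤ 1 / 2 := by
  have := one_add_sq_div_two_mul_gaussianPDFReal_std_le x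
  nlinarith [mul_nonneg (sq_nonneg x) (gaussianPDFReal_nonneg 0 1 x)]

lemma sq_mul_gaussianPDFReal_std_le_one (x : ℝ) : x ^ 2 * φ x ≤ 1 := by
  have := one_add_sq_div_two_mul_gaussianPDFReal_std_le x
  linarith [gaussianPDFReal_nonneg 0 1 x]

lemma abs_mul_gaussianPDFReal_std_le_one (x : ℝ) : |x * φ x| ≤ 1 := by
  have hφ := gaussianPDFReal_nonneg 0 1 x
  have hx : |x| ≤ 1 + x ^ 2 / 2 := by
    rw [← sq_abs]; nlinarith [sq_nonneg (|x| - 1)]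
  rw [abs_mul, abs_of_nonneg hφ]
  linarith [mul_le_mul_of_nonneg_right hx hφ, one_add_sq_div_two_mul_gaussianPDFReal_std_le x]

lemma hasDerivAt_gaussianPDFReal_std (x : ℝ) : HasDerivAt φ (-(x * φ x)) x := by
  have hexponent : HasDerivAt (fun x : ℝ => -x ^ 2 / 2) (-x) x := by
    exact ((hasDerivAt_pow 2 x).neg.div_const 2).congr_deriv (by norm_num [neg_div])
  rw [funext gaussianPDFReal_std_eq]
  exact (hexponent.exp.const_mul (√(2 * π))⁻¹).congr_deriv (by ring)

lemma continuous_gaussianPDFReal_std : Continuous φ :=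
  continuous_iff_continuousAt.2 fun x => (hasDerivAt_gaussianPDFReal_std x).continuousAt

lemma abs_gaussianPDFReal_std_sub_le (x y : ℝ) : |φ x - φ y| ≤ |x - y| := by
  simpa using convex_univ.norm_image_sub_le_of_norm_hasDerivWithin_le (C := 1)
    (fun x _ => (hasDerivAt_gaussianPDFReal_std x).hasDerivWithinAt)
    (fun x _ => by simpa using abs_mul_gaussianPDFReal_std_le_one x)
    (Set.mem_univ y) (Set.mem_univ x)

lemma abs_mul_gaussianPDFReal_std_mul_sub_le (a l l' : ℝ) :
    |l * φ (a * l) - l' * φ (a * l')| ≤ |l - l'| := by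
  have hderiv (x : ℝ) : HasDerivAt (fun l => l * φ (a * l))
      (φ (a * x) - (a * x) ^ 2 * φ (a * x)) x :=
    ((hasDerivAt_id' x).mul ((hasDerivAt_gaussianPDFReal_std (a * x)).comp x
      ((hasDerivAt_id' x).const_mul a))).congr_deriv (by simp only [Function.comp_apply]; ring)
  have hbound (x : ℝ) : ‖φ (a * x) - (a * x) ^ 2 * φ (a * x)‖ ≤ 1 :=
    abs_sub_le_of_nonneg_of_le (gaussianPDFReal_nonneg 0 1 _)
      ((gaussianPDFReal_std_le_half _).trans one_half_lt_one.le)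
      (mul_nonneg (sq_nonneg _) (gaussianPDFReal_nonneg 0 1 _))
      (sq_mul_gaussianPDFReal_std_le_one _)
  simpa using convex_univ.norm_image_sub_le_of_norm_hasDerivWithin_le
    (fun x _ => (hderiv x).hasDerivWithinAt) (fun x _ => hbound x)
    (Set.mem_univ l') (Set.mem_univ l)

lemma gaussianTail_nonneg (u : ℝ) : 0 ≤ gaussianTail u := measureReal_nonneg

lemma gaussianTail_le_one (u : ℝ) : gaussianTail u ≤ 1 := measureReal_le_one

lemma gaussianTail_eq_integral (u : ℝ) : gaussianTail u = ∫ x in Set.Ioi u, φ x := by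
  rw [gaussianTail, Measure.real, gaussianReal_apply_eq_integral _ one_ne_zero,
    integral_Ici_eq_integral_Ioi, ENNReal.toReal_ofReal]
  exact setIntegral_nonneg measurableSet_Ioi fun x _ => gaussianPDFReal_nonneg _ _ _

lemma hasDerivAt_gaussianTail (u : ℝ) : HasDerivAt gaussianTail (-φ u) u := by
  have hsplit : gaussianTail = fun u => (∫ x in Set.Ioi 0, φ x) - ∫ x in (0 : ℝ)..u, φ x := by
    funext u
    rw [gaussianTail_eq_integral, ← intervalIntegral.integral_Ioi_sub_Ioi'
      (integrable_gaussianPDFReal 0 1).integrableOn (integrable_gaussianPDFReal 0 1).integrableOn]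
    ring
  have hφ := continuous_gaussianPDFReal_std
  rw [hsplit]
  exact (intervalIntegral.integral_hasDerivAt_right (hφ.intervalIntegrable 0 u)
    hφ.stronglyMeasurable.stronglyMeasurableAtFilter hφ.continuousAt).const_sub _

lemma gaussianTail_sub_le (k δ : ℝ) :
    gaussianTail (k - δ) ≤ gaussianTail k + δ * φ k + δ ^ 2 := by
  have hderiv (x : ℝ) :
      HasDerivAt (fun x => gaussianTail (k - x) - x * φ k) (φ (k - x) - φ k) x :=
    (((hasDerivAt_gaussianTail (k - x)).comp x ((hasDerivAt_id' x).const_sub k)).sub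
      ((hasDerivAt_id' x).mul_const (φ k))).congr_deriv (by ring)
  have hbound : ∀ x ∈ Set.uIcc 0 δ, ‖φ (k - x) - φ k‖ ≤ |δ| := fun x hx =>
    (abs_gaussianPDFReal_std_sub_le _ _).trans (by simpa using Set.abs_sub_left_of_mem_uIcc hx)
  have hrem := (convex_uIcc 0 δ).norm_image_sub_le_of_norm_hasDerivWithin_le
    (fun x _ => (hderiv x).hasDerivWithinAt) hbound Set.left_mem_uIcc Set.right_mem_uIcc
  simp only [sub_zero, zero_mul, norm_eq_abs, abs_mul_abs_self] at hrem
  linarith [(abs_le.1 hrem).2, sq δ]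

lemma abs_gaussianTail_mul_sub_le (a l : ℝ) :
    |gaussianTail (a * l) - gaussianTail a| ≤ 2 * |l - 1| := by
  obtain h | h := lt_or_ge l (1 / 2)
  · have hfar : 1 / 2 ≤ |l - 1| := by rw [abs_of_nonpos] <;> linarith
    have := abs_sub_le_of_nonneg_of_le (gaussianTail_nonneg (a * l)) (gaussianTail_le_one _)
      (gaussianTail_nonneg a) (gaussianTail_le_one a)
    linarith
  have hderiv (x : ℝ) : HasDerivAt (fun l => gaussianTail (a * l)) (-φ (a * x) * a) x :=
    ((hasDerivAt_gaussianTail (a * x)).comp x ((hasDerivAt_id' x).const_mul a)).congr_deriv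
      (by ring)
  have hbound : ∀ x ∈ Set.Ici (1 / 2 : ℝ), ‖-φ (a * x) * a‖ ≤ 2 := fun x hx => by
    have hx : (1 / 2 : ℝ) ≤ x := hx
    have hone := abs_mul_gaussianPDFReal_std_le_one (a * x)
    rw [show a * x * φ (a * x) = φ (a * x) * a * x by ring, abs_mul,
      abs_of_pos (a := x) (by linarith)] at hone
    rw [neg_mul, norm_neg, norm_eq_abs]
    nlinarith [abs_nonneg (φ (a * x) * a)]
  simpa using (convex_Ici (1 / 2 : ℝ)).norm_image_sub_le_of_norm_hasDerivWithin_le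
    (fun x _ => (hderiv x).hasDerivWithinAt) hbound
    (Set.mem_Ici.2 one_half_lt_one.le) h

lemma tendsto_gaussianPDFReal_std_atTop : Tendsto φ atTop (nhds 0) := by
  refine squeeze_zero' (.of_forall (gaussianPDFReal_nonneg 0 1)) ?_ tendsto_inv_atTop_zero
  filter_upwards [eventually_gt_atTop 0] with x hx
  rw [← one_div, le_div_iff₀' hx]
  exact (le_abs_self _).trans (abs_mul_gaussianPDFReal_std_le_one x)

lemma setIntegral_Ici_gaussianReal_std (h : ℝ) : ∫ y in Set.Ici h, y ∂γ = φ h := by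
  have hint : Integrable fun y => y * φ y := by
    refine ((integrable_mul_exp_neg_mul_sq (b := 1 / 2) (by norm_num)).const_mul
      (√(2 * π))⁻¹).congr (.of_forall fun y => ?_)
    simp only [gaussianPDFReal_std_eq]
    ring_nf
  have hderiv (y : ℝ) : HasDerivAt (fun y => -φ y) (y * φ y) y :=
    (hasDerivAt_gaussianPDFReal_std y).neg.congr_deriv (neg_neg _)
  have hFTC : ∫ y in Set.Ioi h, y * φ y = φ h := by
    simpa using integral_Ioi_of_hasDerivAt_of_tendsto' (fun y _ => hderiv y) hint.integrableOn
      tendsto_gaussianPDFReal_std_atTop.neg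
  rw [← hFTC, ← integral_Ici_eq_integral_Ioi, ← integral_indicator measurableSet_Ici,
    ← integral_indicator measurableSet_Ici, integral_gaussianReal_eq_integral_smul one_ne_zero]
  congr 1 with y
  by_cases hy : y ∈ Set.Ici h <;> simp [hy, mul_comm]

end StandardGaussian

lemma abs_inv_sqrt_sub_one_le {s : ℝ} (hs : 1 / 2 ≤ s) : |(√s)⁻¹ - 1| ≤ 2 * |s - 1| := by
  have hpos : 0 < √s := sqrt_pos.2 (by linarith)
  have hsq : √s ^ 2 = s := sq_sqrt (by linarith)
  have hrat : (√s)⁻¹ - 1 = (1 - s) / (√s * (1 + √s)) := by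
    field_simp
    linarith
  have hden : 1 / 2 ≤ √s * (1 + √s) := by nlinarith
  rw [hrat, abs_div, abs_of_pos (a := √s * _) (by positivity), div_le_iff₀ (by positivity),
    abs_sub_comm]
  nlinarith [abs_nonneg (s - 1), hden]

lemma abs_inv_sqrt_mul_gaussianPDFReal_std_sub_le {s : ℝ} (hs : 1 / 2 ≤ s) (a : ℝ) :
    |(√s)⁻¹ * φ (a * (√s)⁻¹) - φ a| ≤ 2 * |s - 1| := by
  simpa using (abs_mul_gaussianPDFReal_std_mul_sub_le a (√s)⁻¹ 1).trans
    (abs_inv_sqrt_sub_one_le hs)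

lemma inv_sqrt_mul_gaussianPDFReal_std_le_one {s : ℝ} (hs : 1 / 2 ≤ s) (x : ℝ) :
    (√s)⁻¹ * φ x ≤ 1 := by
  have hinv : (√s)⁻¹ ≤ 2 :=
    inv_le_of_inv_le₀ two_pos (le_sqrt_of_sq_le (by linarith))
  calc (√s)⁻¹ * φ x ≤ 2 * (1 / 2) := by
        gcongr
        exacts [gaussianPDFReal_nonneg 0 1 x, gaussianPDFReal_std_le_half x]
    _ = 1 := by norm_num

lemma abs_inv_sqrt_mul_gaussianPDFReal_std_mul_sub_le {r s : ℝ} (hr : 1 / 2 ≤ r) (hs : 1 / 2 ≤ s)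
    (a b : ℝ) :
    |(√r)⁻¹ * φ (a * (√r)⁻¹) * ((√s)⁻¹ * φ (b * (√s)⁻¹)) - φ a * φ b| ≤
      2 * |r - 1| + 2 * |s - 1| := by
  set A := (√r)⁻¹ * φ (a * (√r)⁻¹)
  set B := (√s)⁻¹ * φ (b * (√s)⁻¹)
  have hA : |A| ≤ 1 :=
    (abs_of_nonneg (mul_nonneg (by positivity) (gaussianPDFReal_nonneg 0 1 _))).trans_le
      (inv_sqrt_mul_gaussianPDFReal_std_le_one hr _)
  have hφ : |φ b| ≤ 1 := (abs_of_nonneg (gaussianPDFReal_nonneg 0 1 b)).trans_le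
    ((gaussianPDFReal_std_le_half b).trans one_half_lt_one.le)
  calc |A * B - φ a * φ b|
      = |φ b * (A - φ a) + A * (B - φ b)| := by ring_nf
    _ ≤ |φ b| * |A - φ a| + |A| * |B - φ b| := by
      simpa only [abs_mul] using abs_add_le (φ b * (A - φ a)) (A * (B - φ b))
    _ ≤ 1 * (2 * |r - 1|) + 1 * (2 * |s - 1|) := by
      gcongr
      · exact abs_inv_sqrt_mul_gaussianPDFReal_std_sub_le hr a
      · exact abs_inv_sqrt_mul_gaussianPDFReal_std_sub_le hs b
    _ = 2 * |r - 1| + 2 * |s - 1| := by ring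

lemma gaussianReal_eq_map_sqrt_mul (v : ℝ≥0) :
    gaussianReal 0 v = (γ).map (fun y => √(v : ℝ) * y) := by
  rw [gaussianReal_map_const_mul, mul_zero, mul_one]
  congr 1
  ext
  simp

lemma gaussianReal_real_Ici {s : ℝ≥0} (hs : s ≠ 0) (a : ℝ) :
    (gaussianReal 0 s).real (Set.Ici a) = gaussianTail (a * (√s)⁻¹) := by
  have hpos : 0 < √(s : ℝ) := sqrt_pos.2 (NNReal.coe_pos.2 (pos_iff_ne_zero.2 hs))
  rw [gaussianReal_eq_map_sqrt_mul, map_measureReal_apply (by fun_prop) measurableSet_Ici,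
    gaussianTail]
  congr 1 with y
  simp [← div_eq_mul_inv, div_le_iff₀' hpos]

lemma abs_gaussianReal_real_Ici_sub_gaussianTail_le (s : ℝ≥0) (a : ℝ) :
    |(gaussianReal 0 s).real (Set.Ici a) - gaussianTail a| ≤ 4 * |(s : ℝ) - 1| := by
  obtain hs | hs := lt_or_ge (s : ℝ) (1 / 2)
  · have hfar : 1 / 2 ≤ |(s : ℝ) - 1| := by rw [abs_of_nonpos] <;> linarith
    have := abs_sub_le_of_nonneg_of_le
      (measureReal_nonneg (μ := gaussianReal 0 s) (s := Set.Ici a)) measureReal_le_one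
      (gaussianTail_nonneg a) (gaussianTail_le_one a)
    linarith
  · have hs0 : s ≠ 0 := fun h => by norm_num [h] at hs
    rw [gaussianReal_real_Ici hs0]
    have := abs_gaussianTail_mul_sub_le a (√(s : ℝ))⁻¹
    linarith [abs_inv_sqrt_sub_one_le hs]

section Prod

variable {X Y : Type*} [MeasurableSpace X] [MeasurableSpace Y] {μ : Measure X} {ν : Measure Y}

lemma setIntegral_prod_eq_integral_setIntegral_preimage [SFinite μ] [SFinite ν]
    {E : Set (X × Y)} (hE : MeasurableSet E) {F : X × Y → ℝ} (hF : IntegrableOn F E (μ.prod ν)) :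
    ∫ z in E, F z ∂(μ.prod ν) = ∫ x, ∫ y in Prod.mk x ⁻¹' E, F (x, y) ∂ν ∂μ := by
  rw [← integral_indicator hE, integral_prod _ ((integrable_indicator_iff hE).2 hF)]
  exact integral_congr_ae (.of_forall fun x => by
    simp only [← integral_indicator (measurable_prodMk_left hE)]; rfl)

lemma measureReal_prod_eq_integral [IsFiniteMeasure μ] [IsFiniteMeasure ν] {E : Set (X × Y)}
    (hE : MeasurableSet E) :
    (μ.prod ν).real E = ∫ x, ν.real (Prod.mk x ⁻¹' E) ∂μ := by
  simpa using setIntegral_prod_eq_integral_setIntegral_preimage (F := fun _ => 1) hE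
    (integrable_const (μ := (μ.prod ν).restrict E) (1 : ℝ))

lemma setIntegral_mul_le_integral_mul_sq [IsFiniteMeasure μ] {E : Set (X × X)}
    (hE : MeasurableSet E) (hsymm : Prod.swap ⁻¹' E = E) {f : X → ℝ} (hf : MemLp f 2 μ) :
    ∫ z in E, f z.1 * f z.2 ∂(μ.prod μ) ≤ ∫ x, μ.real (Prod.mk x ⁻¹' E) * f x ^ 2 ∂μ := by
  have hmul : Integrable (fun z : X × X => f z.1 * f z.2) (μ.prod μ) :=
    (hf.integrable one_le_two).mul_prod (hf.integrable one_le_two)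
  have hfst : Integrable (fun z : X × X => f z.1 ^ 2) (μ.prod μ) := hf.integrable_sq.comp_fst μ
  have hsnd : Integrable (fun z : X × X => f z.2 ^ 2) (μ.prod μ) := hf.integrable_sq.comp_snd μ
  have hmean : Integrable (fun z : X × X => (f z.1 ^ 2 + f z.2 ^ 2) / 2) (μ.prod μ) :=
    (hfst.add hsnd).div_const 2
  have hswap : ∫ z in E, f z.2 ^ 2 ∂(μ.prod μ) = ∫ z in E, f z.1 ^ 2 ∂(μ.prod μ) := by
    have := Measure.measurePreserving_swap.setIntegral_preimage_emb
      (MeasurableEquiv.prodComm (α := X) (β := X)).measurableEmbedding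
      (μ := μ.prod μ) (ν := μ.prod μ) (fun z => f z.1 ^ 2) E
    rwa [hsymm] at this
  calc ∫ z in E, f z.1 * f z.2 ∂(μ.prod μ)
      ≤ ∫ z in E, (f z.1 ^ 2 + f z.2 ^ 2) / 2 ∂(μ.prod μ) :=
        integral_mono hmul.integrableOn hmean.integrableOn fun z => by
          linarith [two_mul_le_add_sq (f z.1) (f z.2)]
    _ = ∫ z in E, f z.1 ^ 2 ∂(μ.prod μ) := by
        rw [integral_div, integral_add hfst.integrableOn hsnd.integrableOn, hswap]
        ring
    _ = ∫ x, μ.real (Prod.mk x ⁻¹' E) * f x ^ 2 ∂μ := by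
        rw [setIntegral_prod_eq_integral_setIntegral_preimage hE hfst.integrableOn]
        simp only [setIntegral_const, smul_eq_mul]

end Prod

lemma integral_pow_three_le {Ω : Type*} [MeasurableSpace Ω] {P : Measure Ω}
    [IsProbabilityMeasure P] {f : Ω → ℝ} (hf : AEStronglyMeasurable f P) (hf0 : ∀ ω, 0 ≤ f ω)
    (hf1 : ∀ ω, f ω ≤ 1) (c : ℝ) :
    ∫ ω, f ω ^ 3 ∂P ≤ P[f] ^ 3 + 3 * ∫ ω, (f ω - c) ^ 2 ∂P := by
  set p := P[f]
  have hLp : MemLp f 2 P := .of_bound hf 1 (.of_forall fun ω => by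
    rw [norm_eq_abs, abs_of_nonneg (hf0 ω)]
    exact hf1 ω)
  have hint : Integrable f P := hLp.integrable one_le_two
  have hdev : Integrable (fun ω => (f ω - p) ^ 2) P := (hLp.sub (memLp_const p)).integrable_sq
  have hp1 : p ≤ 1 := by simpa using integral_mono hint (integrable_const 1) hf1
  have hvar : ∫ ω, (f ω - p) ^ 2 ∂P ≤ ∫ ω, (f ω - c) ^ 2 ∂P := by
    rw [← variance_eq_integral hf.aemeasurable, ← variance_sub_const hf c]
    exact variance_le_expectation_sq (hf.sub aestronglyMeasurable_const)
  have hlin : Integrable (fun ω => 3 * p ^ 2 * f ω) P := hint.const_mul _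
  have hline : Integrable (fun ω => 3 * p ^ 2 * f ω - 2 * p ^ 3) P := hlin.sub (integrable_const _)
  calc ∫ ω, f ω ^ 3 ∂P
      ≤ ∫ ω, (3 * p ^ 2 * f ω - 2 * p ^ 3 + 3 * (f ω - p) ^ 2) ∂P := by
        refine integral_mono_of_nonneg (.of_forall fun ω => pow_nonneg (hf0 ω) 3)
          (hline.add (hdev.const_mul 3)) (.of_forall fun ω => ?_)
        simp only
        -- `u³` minus its tangent at `p` is `(u - p)² (u + 2p)`, and `u + 2p ≤ 3` on `[0, 1]`.
        nlinarith [mul_nonneg (sq_nonneg (f ω - p)) (by linarith [hf1 ω] : 0 ≤ 3 - f ω - 2 * p)]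
    _ = p ^ 3 + 3 * ∫ ω, (f ω - p) ^ 2 ∂P := by
        rw [integral_add hline (hdev.const_mul 3), integral_sub hlin (integrable_const _),
          integral_const, probReal_univ, one_smul, integral_const_mul, integral_const_mul,
          show ∫ ω, f ω ∂P = p from rfl]
        ring
    _ ≤ p ^ 3 + 3 * ∫ ω, (f ω - c) ^ 2 ∂P := by linarith

section GaussianPair

variable {Ω : Type*} [MeasurableSpace Ω] {P : Measure Ω} {U V : Ω → ℝ}

lemma measureReal_setOf_le_eq_gaussianReal_real_Ici (hU : HasGaussianLaw U P) (hU0 : P[U] = 0)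
    (t : ℝ) : P.real {ω | t ≤ U ω} = (gaussianReal 0 Var[U; P].toNNReal).real (Set.Ici t) := by
  rw [← hU0, ← hU.map_eq_gaussianReal, map_measureReal_apply_of_aemeasurable hU.aemeasurable
    measurableSet_Ici]
  rfl

lemma measureReal_setOf_le_eq_gaussianTail (hU : HasGaussianLaw U P) (hU0 : P[U] = 0)
    (hvar : 0 < Var[U; P]) (t : ℝ) :
    P.real {ω | t ≤ U ω} = gaussianTail (t * (√Var[U; P])⁻¹) := by
  rw [measureReal_setOf_le_eq_gaussianReal_real_Ici hU hU0,
    gaussianReal_real_Ici (toNNReal_pos.2 hvar).ne', coe_toNNReal _ hvar.le]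

lemma abs_measureReal_setOf_le_sub_gaussianTail_le (hU : HasGaussianLaw U P) (hU0 : P[U] = 0)
    (t : ℝ) : |P.real {ω | t ≤ U ω} - gaussianTail t| ≤ 4 * |Var[U; P] - 1| := by
  rw [measureReal_setOf_le_eq_gaussianReal_real_Ici hU hU0]
  simpa only [coe_toNNReal _ (variance_nonneg U P)] using
    abs_gaussianReal_real_Ici_sub_gaussianTail_le Var[U; P].toNNReal t

lemma integral_abs_le_half_one_add_variance (hU : HasGaussianLaw U P) (hU0 : P[U] = 0) :
    ∫ ω, |U ω| ∂P ≤ (1 + Var[U; P]) / 2 := by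
  have := hU.isProbabilityMeasure
  have hsq := hU.memLp_two.integrable_sq
  calc ∫ ω, |U ω| ∂P
      ≤ ∫ ω, (1 + U ω ^ 2) / 2 ∂P :=
        integral_mono hU.integrable.abs (((integrable_const 1).add hsq).div_const 2) fun ω => by
          simp only
          nlinarith [sq_nonneg (|U ω| - 1), sq_abs (U ω)]
    _ = (1 + Var[U; P]) / 2 := by
        rw [integral_div, integral_add (integrable_const 1) hsq,
          variance_of_integral_eq_zero hU.aemeasurable hU0]
        simp

lemma abs_setIntegral_le_half_one_add_variance (hU : HasGaussianLaw U P) (hU0 : P[U] = 0)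
    (A : Set Ω) : |∫ ω in A, U ω ∂P| ≤ (1 + Var[U; P]) / 2 :=
  (abs_integral_le_integral_abs.trans (setIntegral_le_integral hU.integrable.abs
    (.of_forall fun _ => abs_nonneg _))).trans (integral_abs_le_half_one_add_variance hU hU0)

lemma indepFun_regressionResidual (hUV : HasGaussianLaw (fun ω => (U ω, V ω)) P) :
    IndepFun U (fun ω => Var[U; P] * V ω - cov[U, V; P] * U ω) P := by
  have := hUV.isProbabilityMeasure
  have hU := hUV.fst.memLp_two
  have hV := hUV.snd.memLp_two
  refine HasGaussianLaw.indepFun_of_covariance_eq_zero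
    (hUV.map_fun ((ContinuousLinearMap.fst ℝ ℝ ℝ).prod (Var[U; P] •
      ContinuousLinearMap.snd ℝ ℝ ℝ - cov[U, V; P] • ContinuousLinearMap.fst ℝ ℝ ℝ))) ?_
  rw [covariance_fun_sub_right hU (hV.const_mul _) (hU.const_mul _), covariance_const_mul_right,
    covariance_const_mul_right, covariance_self hUV.fst.aemeasurable]
  ring

lemma variance_mul_setIntegral_preimage_eq (hUV : HasGaussianLaw (fun ω => (U ω, V ω)) P)
    (hU : Measurable U) (hU0 : P[U] = 0) (hV0 : P[V] = 0) {s : Set ℝ} (hs : MeasurableSet s) :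
    Var[U; P] * ∫ ω in U ⁻¹' s, V ω ∂P = cov[U, V; P] * ∫ ω in U ⁻¹' s, U ω ∂P := by
  have hUi := hUV.fst.integrable.const_mul cov[U, V; P]
  have hVi := hUV.snd.integrable.const_mul Var[U; P]
  have hmean : ∫ ω, (Var[U; P] * V ω - cov[U, V; P] * U ω) ∂P = 0 := by
    rw [integral_sub hVi hUi, integral_const_mul, integral_const_mul, hU0, hV0]
    ring
  have hzero : ∫ ω in U ⁻¹' s, (Var[U; P] * V ω - cov[U, V; P] * U ω) ∂P = 0 := by
    have hfactor := (indepFun_regressionResidual hUV).integral_fun_comp_mul_comp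
      hU.aemeasurable (hVi.sub hUi).aemeasurable (f := s.indicator 1) (g := fun x => x)
      (measurable_one.indicator hs).aestronglyMeasurable measurable_id.aestronglyMeasurable
    rw [← integral_indicator (hU hs), ← mul_zero (∫ ω, s.indicator (1 : ℝ → ℝ) (U ω) ∂P), ← hmean,
      ← hfactor]
    congr 1 with ω
    by_cases hω : U ω ∈ s <;> simp [Set.indicator, hω]
  rw [integral_sub hVi.integrableOn hUi.integrableOn, integral_const_mul, integral_const_mul]
    at hzero
  exact sub_eq_zero.1 hzero

lemma abs_setIntegral_setOf_le_le (hUV : HasGaussianLaw (fun ω => (U ω, V ω)) P)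
    (hU : Measurable U) (hU0 : P[U] = 0) (hV0 : P[V] = 0) (hvar : Var[V; P] ≤ Var[U; P]) (t : ℝ) :
    |∫ ω in {ω | t ≤ U ω}, V ω ∂P| ≤ 2 * |cov[U, V; P]| + 4 * (Var[U; P] - 1) ^ 2 := by
  obtain hs | hs := lt_or_ge Var[U; P] (1 / 2)
  -- For small variance, `4 (Var U - 1)² ≥ 1` already exceeds `𝔼|V| ≤ (1 + Var V) / 2`.
  · have := abs_setIntegral_le_half_one_add_variance hUV.snd hV0 {ω | t ≤ U ω}
    nlinarith [abs_nonneg cov[U, V; P]]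
  · have hreg := congrArg abs
      (variance_mul_setIntegral_preimage_eq hUV hU hU0 hV0 (measurableSet_Ici (a := t)))
    have hUint := abs_setIntegral_le_half_one_add_variance hUV.fst hU0 (U ⁻¹' Set.Ici t)
    rw [abs_mul, abs_mul, abs_of_nonneg (variance_nonneg U P)] at hreg
    have hcov := mul_le_mul_of_nonneg_left hUint (abs_nonneg cov[U, V; P])
    change |∫ ω in U ⁻¹' Set.Ici t, V ω ∂P| ≤ _
    nlinarith [abs_nonneg cov[U, V; P], sq_nonneg (Var[U; P] - 1),
      abs_nonneg (∫ ω in U ⁻¹' Set.Ici t, V ω ∂P)]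

lemma integral_sq_gaussianReal_std : ∫ u, u ^ 2 ∂γ = 1 := by
  have h := variance_fun_id_gaussianReal (μ := 0) (v := 1)
  rw [variance_of_integral_eq_zero (by fun_prop) (by simp)] at h
  simpa using h

lemma gaussianReal_real_Ici_sub_le (s : ℝ≥0) (k δ : ℝ) :
    (gaussianReal 0 s).real (Set.Ici (k - δ)) ≤
      gaussianTail k + δ * φ k + δ ^ 2 + 4 * |(s : ℝ) - 1| := by
  linarith [(abs_le.1 (abs_gaussianReal_real_Ici_sub_gaussianTail_le s (k - δ))).2,
    gaussianTail_sub_le k δ]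

lemma measurable_gaussianReal_real_Ici (s : ℝ≥0) :
    Measurable fun a => (gaussianReal 0 s).real (Set.Ici a) :=
  Antitone.measurable fun _ _ hab => measureReal_mono (Set.Ici_subset_Ici.2 hab)

lemma setIntegral_Ici_gaussianReal_real_Ici_le (s : ℝ≥0) (h k r : ℝ) :
    ∫ u in Set.Ici h, (gaussianReal 0 s).real (Set.Ici (k - r * u)) ∂γ ≤
      gaussianTail h * gaussianTail k + r * φ h * φ k + r ^ 2 + 4 * |(s : ℝ) - 1| := by
  set ε : ℝ := 4 * |(s : ℝ) - 1|
  have hlin : Integrable (fun u : ℝ => u) γ :=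
    memLp_one_iff_integrable.1 (memLp_id_gaussianReal 1)
  have hsq : Integrable (fun u : ℝ => u ^ 2) γ := (memLp_id_gaussianReal 2).integrable_sq
  have hquad : Integrable (fun u : ℝ => r ^ 2 * u ^ 2) γ := hsq.const_mul _
  have hconst : Integrable (fun _ : ℝ => gaussianTail k + ε) γ := integrable_const _
  have haff : Integrable (fun u : ℝ => gaussianTail k + ε + r * φ k * u) γ :=
    hconst.add (hlin.const_mul _)
  have hright : Integrable (fun u : ℝ => gaussianTail k + ε + r * φ k * u + r ^ 2 * u ^ 2) γ :=
    haff.add hquad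
  have hleft : Integrable (fun u => (gaussianReal 0 s).real (Set.Ici (k - r * u))) γ :=
    .of_bound ((measurable_gaussianReal_real_Ici s).comp (by fun_prop)).aestronglyMeasurable 1
      (.of_forall fun u => (abs_of_nonneg measureReal_nonneg).trans_le measureReal_le_one)
  calc ∫ u in Set.Ici h, (gaussianReal 0 s).real (Set.Ici (k - r * u)) ∂γ
      ≤ ∫ u in Set.Ici h, (gaussianTail k + ε + r * φ k * u + r ^ 2 * u ^ 2) ∂γ :=
        integral_mono hleft.integrableOn hright.integrableOn fun u => by
          linarith [gaussianReal_real_Ici_sub_le s k (r * u)]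
    _ = gaussianTail h * (gaussianTail k + ε) + r * φ k * φ h
          + r ^ 2 * ∫ u in Set.Ici h, u ^ 2 ∂γ := by
        rw [integral_add haff.integrableOn hquad.integrableOn,
          integral_add hconst.integrableOn (hlin.const_mul _).integrableOn, integral_const_mul,
          integral_const_mul, setIntegral_Ici_gaussianReal_std, setIntegral_const, smul_eq_mul]
        rfl
    _ ≤ gaussianTail h * gaussianTail k + r * φ h * φ k + r ^ 2 + ε := by
        have hsecond : ∫ u in Set.Ici h, u ^ 2 ∂γ ≤ 1 := integral_sq_gaussianReal_std ▸
          setIntegral_le_integral hsq (.of_forall fun u => sq_nonneg u)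
        have hε : gaussianTail h * ε ≤ ε :=
          mul_le_of_le_one_left (by positivity) (gaussianTail_le_one h)
        nlinarith [mul_le_mul_of_nonneg_left hsecond (sq_nonneg r)]

lemma variance_sub_covariance_mul (hUV : HasGaussianLaw (fun ω => (U ω, V ω)) P)
    (hU1 : Var[U; P] = 1) (hV1 : Var[V; P] = 1) :
    Var[fun ω => V ω - cov[U, V; P] * U ω; P] = 1 - cov[U, V; P] ^ 2 := by
  have := hUV.isProbabilityMeasure
  rw [variance_fun_sub hUV.snd.memLp_two (hUV.fst.memLp_two.const_mul _), variance_const_mul,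
    covariance_const_mul_right, covariance_comm V U, hU1, hV1]
  ring

lemma map_prodMk_sub_covariance_mul (hUV : HasGaussianLaw (fun ω => (U ω, V ω)) P)
    (hU0 : P[U] = 0) (hV0 : P[V] = 0) (hU1 : Var[U; P] = 1) (hV1 : Var[V; P] = 1) :
    P.map (fun ω => (U ω, V ω - cov[U, V; P] * U ω)) =
      (γ).prod (gaussianReal 0 (1 - cov[U, V; P] ^ 2).toNNReal) := by
  have := hUV.isProbabilityMeasure
  have hind := indepFun_regressionResidual hUV
  simp only [hU1, one_mul] at hind
  have hW : HasGaussianLaw (fun ω => V ω - cov[U, V; P] * U ω) P :=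
    hUV.map_fun (ContinuousLinearMap.snd ℝ ℝ ℝ - cov[U, V; P] • ContinuousLinearMap.fst ℝ ℝ ℝ)
  have hW0 : ∫ ω, (V ω - cov[U, V; P] * U ω) ∂P = 0 := by
    rw [integral_sub hUV.snd.integrable (hUV.fst.integrable.const_mul _), integral_const_mul, hU0,
      hV0, mul_zero, sub_zero]
  rw [(indepFun_iff_map_prod_eq_prod_map_map hUV.fst.aemeasurable hW.aemeasurable).1 hind,
    hUV.fst.map_eq_gaussianReal, hW.map_eq_gaussianReal, hU0, hW0, hU1,
    variance_sub_covariance_mul hUV hU1 hV1, toNNReal_one]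

lemma measureReal_setOf_le_and_le_le_of_variance_eq_one
    (hUV : HasGaussianLaw (fun ω => (U ω, V ω)) P) (hU0 : P[U] = 0) (hV0 : P[V] = 0)
    (hU1 : Var[U; P] = 1) (hV1 : Var[V; P] = 1) (h k : ℝ) :
    P.real {ω | h ≤ U ω ∧ k ≤ V ω} ≤ gaussianTail h * gaussianTail k
      + cov[U, V; P] * φ h * φ k + 5 * cov[U, V; P] ^ 2 := by
  set r := cov[U, V; P]
  set s := (1 - r ^ 2).toNNReal
  have hs : (s : ℝ) = 1 - r ^ 2 :=
    coe_toNNReal _ (variance_sub_covariance_mul hUV hU1 hV1 ▸ variance_nonneg _ P)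
  let E : Set (ℝ × ℝ) := {z | h ≤ z.1} ∩ {z | k - r * z.1 ≤ z.2}
  have hE : MeasurableSet E := (measurableSet_le measurable_const measurable_fst).inter
    (measurableSet_le (by fun_prop) measurable_snd)
  have hslice (u : ℝ) : (gaussianReal 0 s).real (Prod.mk u ⁻¹' E) =
      (Set.Ici h).indicator (fun u => (gaussianReal 0 s).real (Set.Ici (k - r * u))) u := by
    by_cases hu : h ≤ u <;> simp [E, hu, Set.Ici]
  have hpair : AEMeasurable (fun ω => (U ω, V ω - r * U ω)) P :=
    hUV.fst.aemeasurable.prodMk (hUV.snd.aemeasurable.sub (hUV.fst.aemeasurable.const_mul r))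
  calc P.real {ω | h ≤ U ω ∧ k ≤ V ω}
      = (P.map (fun ω => (U ω, V ω - r * U ω))).real E := by
        rw [map_measureReal_apply_of_aemeasurable hpair hE]
        simp [E, Set.ofPred_and]
    _ = ∫ u in Set.Ici h, (gaussianReal 0 s).real (Set.Ici (k - r * u)) ∂γ := by
        rw [map_prodMk_sub_covariance_mul hUV hU0 hV0 hU1 hV1, measureReal_prod_eq_integral hE,
          ← integral_indicator measurableSet_Ici]
        exact integral_congr_ae (.of_forall hslice)
    _ ≤ gaussianTail h * gaussianTail k + r * φ h * φ k + 5 * r ^ 2 := by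
        refine (setIntegral_Ici_gaussianReal_real_Ici_le s h k r).trans_eq ?_
        rw [hs, sub_sub_cancel_left, abs_neg, abs_of_nonneg (sq_nonneg r)]
        ring

lemma measureReal_setOf_le_and_le_le_of_variance_pos
    (hUV : HasGaussianLaw (fun ω => (U ω, V ω)) P) (hU0 : P[U] = 0) (hV0 : P[V] = 0)
    (hU : 0 < Var[U; P]) (hV : 0 < Var[V; P]) (h k : ℝ) :
    P.real {ω | h ≤ U ω ∧ k ≤ V ω} ≤ P.real {ω | h ≤ U ω} * P.real {ω | k ≤ V ω}
      + cov[U, V; P] * ((√Var[U; P])⁻¹ * φ (h * (√Var[U; P])⁻¹))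
        * ((√Var[V; P])⁻¹ * φ (k * (√Var[V; P])⁻¹))
      + 5 * (cov[U, V; P] ^ 2 / (Var[U; P] * Var[V; P])) := by
  set l := (√Var[U; P])⁻¹ with hl
  set m := (√Var[V; P])⁻¹ with hm
  have hlpos : 0 < l := inv_pos.2 (sqrt_pos.2 hU)
  have hmpos : 0 < m := inv_pos.2 (sqrt_pos.2 hV)
  have hlsq : l ^ 2 = (Var[U; P])⁻¹ := by rw [hl, inv_pow, sq_sqrt hU.le]
  have hmsq : m ^ 2 = (Var[V; P])⁻¹ := by rw [hm, inv_pow, sq_sqrt hV.le]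
  have hscaled : HasGaussianLaw (fun ω => (l * U ω, m * V ω)) P :=
    hUV.map_fun ((l • ContinuousLinearMap.fst ℝ ℝ ℝ).prod (m • ContinuousLinearMap.snd ℝ ℝ ℝ))
  have hstd := measureReal_setOf_le_and_le_le_of_variance_eq_one hscaled
    (by rw [integral_const_mul, hU0, mul_zero]) (by rw [integral_const_mul, hV0, mul_zero])
    (by rw [variance_const_mul, hlsq, inv_mul_cancel₀ hU.ne'])
    (by rw [variance_const_mul, hmsq, inv_mul_cancel₀ hV.ne']) (l * h) (m * k)
  simp only [mul_le_mul_iff_right₀ hlpos, mul_le_mul_iff_right₀ hmpos,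
    covariance_const_mul_left, covariance_const_mul_right] at hstd
  rw [measureReal_setOf_le_eq_gaussianTail hUV.fst hU0 hU,
    measureReal_setOf_le_eq_gaussianTail hUV.snd hV0 hV, ← hl, ← hm,
    mul_comm h, mul_comm k, div_eq_mul_inv, mul_inv, ← hlsq, ← hmsq]
  refine hstd.trans_eq ?_
  ring

lemma measureReal_setOf_le_and_le_le_of_half_le_variance
    (hUV : HasGaussianLaw (fun ω => (U ω, V ω)) P) (hU0 : P[U] = 0) (hV0 : P[V] = 0)
    (hU : 1 / 2 ≤ Var[U; P]) (hV : 1 / 2 ≤ Var[V; P]) (h k : ℝ) :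
    P.real {ω | h ≤ U ω ∧ k ≤ V ω} ≤ P.real {ω | h ≤ U ω} * P.real {ω | k ≤ V ω}
      + cov[U, V; P] * φ h * φ k
      + 22 * (cov[U, V; P] ^ 2 + (Var[U; P] - 1) ^ 2 + (Var[V; P] - 1) ^ 2) := by
  have hUpos : 0 < Var[U; P] := one_half_pos.trans_le hU
  have hVpos : 0 < Var[V; P] := one_half_pos.trans_le hV
  have hbound := measureReal_setOf_le_and_le_le_of_variance_pos hUV hU0 hV0 hUpos hVpos h k
  set a := (√Var[U; P])⁻¹ * φ (h * (√Var[U; P])⁻¹)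
  set b := (√Var[V; P])⁻¹ * φ (k * (√Var[V; P])⁻¹)
  have hlinear : |a * b - φ h * φ k| ≤ 2 * |Var[U; P] - 1| + 2 * |Var[V; P] - 1| :=
    abs_inv_sqrt_mul_gaussianPDFReal_std_mul_sub_le hU hV h k
  have hquadratic : cov[U, V; P] ^ 2 / (Var[U; P] * Var[V; P]) ≤ 4 * cov[U, V; P] ^ 2 := by
    rw [div_le_iff₀ (mul_pos hUpos hVpos)]
    have : 1 / 2 * (1 / 2) ≤ Var[U; P] * Var[V; P] := by gcongr
    nlinarith [sq_nonneg cov[U, V; P]]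
  have hcross : cov[U, V; P] * (a * b - φ h * φ k) ≤
      2 * cov[U, V; P] ^ 2 + (Var[U; P] - 1) ^ 2 + (Var[V; P] - 1) ^ 2 := by
    calc cov[U, V; P] * (a * b - φ h * φ k)
        ≤ |cov[U, V; P]| * (2 * |Var[U; P] - 1| + 2 * |Var[V; P] - 1|) := by
          refine (le_abs_self _).trans ?_
          rw [abs_mul]
          gcongr
      _ ≤ _ := by
        nlinarith [sq_nonneg (|cov[U, V; P]| - |Var[U; P] - 1|), sq_abs cov[U, V; P],
          sq_nonneg (|cov[U, V; P]| - |Var[V; P] - 1|), sq_abs (Var[U; P] - 1),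
          sq_abs (Var[V; P] - 1)]
  linarith [sq_nonneg (Var[U; P] - 1), sq_nonneg (Var[V; P] - 1)]

lemma measureReal_setOf_le_and_le_le (hUV : HasGaussianLaw (fun ω => (U ω, V ω)) P)
    (hU0 : P[U] = 0) (hV0 : P[V] = 0) (h k : ℝ) :
    P.real {ω | h ≤ U ω ∧ k ≤ V ω} ≤ P.real {ω | h ≤ U ω} * P.real {ω | k ≤ V ω}
      + cov[U, V; P] * φ h * φ k
      + 22 * (cov[U, V; P] ^ 2 + (Var[U; P] - 1) ^ 2 + (Var[V; P] - 1) ^ 2) := by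
  by_cases hvar : 1 / 2 ≤ Var[U; P] ∧ 1 / 2 ≤ Var[V; P]
  · exact measureReal_setOf_le_and_le_le_of_half_le_variance hUV hU0 hV0 hvar.1 hvar.2 h k
  have := hUV.isProbabilityMeasure
  have hfar : 1 / 4 ≤ (Var[U; P] - 1) ^ 2 + (Var[V; P] - 1) ^ 2 := by
    rcases not_and_or.1 hvar with hU | hV <;>
    nlinarith [sq_nonneg (Var[U; P] - 1), sq_nonneg (Var[V; P] - 1)]
  have hprob : P.real {ω | h ≤ U ω ∧ k ≤ V ω} ≤ 1 := measureReal_le_one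
  have hprod : 0 ≤ P.real {ω | h ≤ U ω} * P.real {ω | k ≤ V ω} := by positivity
  have hcross : |cov[U, V; P] * φ h * φ k| ≤ |cov[U, V; P]| := by
    rw [mul_assoc, abs_mul, abs_of_nonneg
      (mul_nonneg (gaussianPDFReal_nonneg 0 1 h) (gaussianPDFReal_nonneg 0 1 k))]
    refine mul_le_of_le_one_right (abs_nonneg _) ?_
    nlinarith [gaussianPDFReal_std_le_half h, gaussianPDFReal_std_le_half k,
      gaussianPDFReal_nonneg 0 1 h, gaussianPDFReal_nonneg 0 1 k]
  nlinarith [(abs_le.1 hcross).1, sq_abs cov[U, V; P], sq_nonneg (|cov[U, V; P]| - 1)]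

end GaussianPair

section GaussPi

variable {d : ℕ} {α : Fin d → ℝ}

lemma dotp_comm (x y : Fin d → ℝ) : dotp x y = dotp y x :=
  Finset.sum_congr rfl fun _ _ => mul_comm _ _

@[fun_prop]
lemma measurable_dotp {X : Type*} [MeasurableSpace X] {f g : X → Fin d → ℝ} (hf : Measurable f)
    (hg : Measurable g) : Measurable fun x => dotp (f x) (g x) := by
  unfold dotp
  fun_prop

lemma dotp_smul_smul (a b : ℝ) (x y : Fin d → ℝ) : dotp (a • x) (b • y) = a * b * dotp x y := by
  simp only [dotp, Finset.mul_sum, Pi.smul_apply, smul_eq_mul, mul_mul_mul_comm]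

instance isProbabilityMeasure_gaussPi : IsProbabilityMeasure (gaussPi d α) := by
  unfold gaussPi
  infer_instance

lemma hasLaw_eval_gaussPi (i : Fin d) :
    HasLaw (fun z : Fin d → ℝ => z i) (gaussianReal 0 (α i).toNNReal) (gaussPi d α) :=
  (measurePreserving_eval (fun i => gaussianReal 0 (α i).toNNReal) i).hasLaw

lemma iIndepFun_eval_gaussPi : iIndepFun (fun i (z : Fin d → ℝ) => z i) (gaussPi d α) :=
  iIndepFun_pi (X := fun _ => id) fun _ => aemeasurable_id

lemma integral_eval_gaussPi (i : Fin d) : ∫ z, z i ∂(gaussPi d α) = 0 := by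
  rw [(hasLaw_eval_gaussPi i).integral_eq, integral_id_gaussianReal]

lemma covariance_eval_gaussPi (hα : ∀ i, 0 ≤ α i) (i j : Fin d) :
    cov[fun z => z i, fun z => z j; gaussPi d α] = if i = j then α i else 0 := by
  split_ifs with hij
  · subst hij
    rw [covariance_self (hasLaw_eval_gaussPi i).aemeasurable,
      (hasLaw_eval_gaussPi i).variance_eq, variance_id_gaussianReal, coe_toNNReal _ (hα i)]
  · exact (iIndepFun_eval_gaussPi.indepFun hij).covariance_eq_zero
      (hasLaw_eval_gaussPi i).hasGaussianLaw.memLp_two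
      (hasLaw_eval_gaussPi j).hasGaussianLaw.memLp_two

lemma hasGaussianLaw_dotp_prodMk_gaussPi (a b : Fin d → ℝ) :
    HasGaussianLaw (fun z => (dotp a z, dotp b z)) (gaussPi d α) := by
  have hid : HasGaussianLaw (fun z : Fin d → ℝ => z) (gaussPi d α) :=
    iIndepFun_eval_gaussPi.hasGaussianLaw fun i => (hasLaw_eval_gaussPi i).hasGaussianLaw
  let L (c : Fin d → ℝ) : (Fin d → ℝ) →L[ℝ] ℝ := ∑ i, c i • ContinuousLinearMap.proj i
  simpa [L, dotp] using hid.map_fun ((L a).prod (L b))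

lemma hasGaussianLaw_dotp_gaussPi (a : Fin d → ℝ) : HasGaussianLaw (dotp a) (gaussPi d α) :=
  (hasGaussianLaw_dotp_prodMk_gaussPi a a).fst

lemma integral_dotp_gaussPi (a : Fin d → ℝ) : ∫ z, dotp a z ∂(gaussPi d α) = 0 := by
  unfold dotp
  rw [integral_finsetSum _ fun i _ =>
    (hasLaw_eval_gaussPi i).hasGaussianLaw.integrable.const_mul (a i)]
  simp only [integral_const_mul, integral_eval_gaussPi, mul_zero, Finset.sum_const_zero]

lemma covariance_dotp_gaussPi (hα : ∀ i, 0 ≤ α i) (a b : Fin d → ℝ) :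
    cov[dotp a, dotp b; gaussPi d α] = dotp (α * a) b := by
  have hLp (c : Fin d → ℝ) (i : Fin d) : MemLp (fun z : Fin d → ℝ => c i * z i) 2 (gaussPi d α) :=
    (hasLaw_eval_gaussPi i).hasGaussianLaw.memLp_two.const_mul _
  unfold dotp
  rw [covariance_fun_sum_fun_sum (hLp a) (hLp b)]
  simp only [covariance_const_mul_left, covariance_const_mul_right, covariance_eval_gaussPi hα,
    mul_ite, mul_zero, Finset.sum_ite_eq, Finset.mem_univ, if_true, Pi.mul_apply]
  exact Finset.sum_congr rfl fun i _ => by ring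

lemma variance_dotp_gaussPi (hα : ∀ i, 0 ≤ α i) (a : Fin d → ℝ) :
    Var[dotp a; gaussPi d α] = dotp (α * a) a := by
  rw [← covariance_self (hasGaussianLaw_dotp_gaussPi a).aemeasurable, covariance_dotp_gaussPi hα]

end GaussPi

section QuadraticForm

variable {d : ℕ} {α : Fin d → ℝ}

lemma memLp_sq_gaussianReal (m : ℝ) (v : ℝ≥0) :
    MemLp (fun y : ℝ => y ^ 2) 2 (gaussianReal m v) := by
  rw [memLp_two_iff_integrable_sq (by fun_prop)]
  simpa [← pow_mul, (by decide : Even 4).pow_abs] using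
    (memLp_id_gaussianReal (μ := m) (v := v) 4).integrable_norm_pow four_ne_zero

lemma variance_sq_gaussianReal (v : ℝ≥0) :
    Var[fun y => y ^ 2; gaussianReal 0 v] = (v : ℝ) ^ 2 * Var[fun y => y ^ 2; γ] := by
  rw [gaussianReal_eq_map_sqrt_mul, variance_map (by fun_prop) (by fun_prop), ← variance_const_mul]
  simp [Function.comp_def, mul_pow]

lemma variance_const_mul_sq_gaussianReal (c : ℝ) (v : ℝ≥0) :
    Var[fun y => c * y ^ 2; gaussianReal 0 v] = (c * v) ^ 2 * Var[fun y => y ^ 2; γ] := by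
  rw [variance_const_mul, variance_sq_gaussianReal]
  ring

lemma memLp_sum_mul_sq_gaussPi (w : Fin d → ℝ) :
    MemLp (fun x => ∑ i, w i * x i ^ 2) 2 (gaussPi d α) :=
  memLp_finsetSum _ fun i _ => ((memLp_sq_gaussianReal 0 _).comp_measurePreserving
    (measurePreserving_eval (fun i => gaussianReal 0 (α i).toNNReal) i)).const_mul (w i)

lemma integral_sum_mul_sq_gaussPi (hα : ∀ i, 0 ≤ α i) (w : Fin d → ℝ) :
    ∫ x, ∑ i, w i * x i ^ 2 ∂(gaussPi d α) = ∑ i, w i * α i := by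
  have hLp (i : Fin d) := (hasLaw_eval_gaussPi (α := α) i).hasGaussianLaw.memLp_two
  rw [integral_finsetSum _ fun i _ => (hLp i).integrable_sq.const_mul (w i)]
  refine Finset.sum_congr rfl fun i _ => ?_
  have hvar := covariance_eval_gaussPi hα i i
  rw [if_pos rfl, covariance_self (hLp i).aemeasurable,
    variance_of_integral_eq_zero (hLp i).aemeasurable (integral_eval_gaussPi i)] at hvar
  rw [integral_const_mul, hvar]

lemma variance_sum_mul_sq_gaussPi (hα : ∀ i, 0 ≤ α i) (w : Fin d → ℝ) :
    Var[fun x => ∑ i, w i * x i ^ 2; gaussPi d α] =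
      Var[fun y => y ^ 2; γ] * ∑ i, (w i * α i) ^ 2 := by
  have hsum := variance_sum_pi (μ := fun i => gaussianReal 0 (α i).toNNReal)
    (X := fun i y => w i * y ^ 2) fun i => (memLp_sq_gaussianReal 0 _).const_mul (w i)
  simp only [variance_const_mul_sq_gaussianReal, coe_toNNReal _ (hα _), ← Finset.sum_mul] at hsum
  rw [gaussPi, mul_comm, ← hsum, Finset.sum_fn]

lemma dotp_mul_self (α x : Fin d → ℝ) : dotp (α * x) x = ∑ i, α i * x i ^ 2 :=
  Finset.sum_congr rfl fun i _ => by rw [Pi.mul_apply]; ring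

lemma memLp_dotp_mul_self_gaussPi : MemLp (fun x => dotp (α * x) x) 2 (gaussPi d α) := by
  simpa only [dotp_mul_self] using memLp_sum_mul_sq_gaussPi α

lemma integrable_sq_dotp_mul_self_sub_one :
    Integrable (fun x => (dotp (α * x) x - 1) ^ 2) (gaussPi d α) :=
  (memLp_dotp_mul_self_gaussPi.sub (memLp_const 1)).integrable_sq

lemma integral_sq_dotp_mul_self_sub_one (hα : ∀ i, 0 ≤ α i) (hsum : ∑ i, α i ^ 2 = 1) :
    ∫ x, (dotp (α * x) x - 1) ^ 2 ∂(gaussPi d α) = Var[fun y => y ^ 2; γ] * ∑ i, α i ^ 4 := by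
  have hmean : ∫ x, dotp (α * x) x ∂(gaussPi d α) = 1 := by
    simp only [dotp_mul_self, integral_sum_mul_sq_gaussPi hα, ← hsum, ← sq]
  rw [← hmean, ← variance_eq_integral memLp_dotp_mul_self_gaussPi.aemeasurable]
  simp only [dotp_mul_self, variance_sum_mul_sq_gaussPi hα, ← sq, ← pow_mul, Nat.reducePow]

lemma memLp_dotp_mul_gaussPi_prod :
    MemLp (fun z => dotp (α * z.1) z.2) 2 ((gaussPi d α).prod (gaussPi d α)) := by
  refine memLp_finsetSum _ fun i _ => ?_
  have hsq := (hasLaw_eval_gaussPi (α := α) i).hasGaussianLaw.memLp_two.integrable_sq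
  rw [memLp_two_iff_integrable_sq (by simp only [Pi.mul_apply]; fun_prop)]
  simpa only [Pi.mul_apply, mul_pow, mul_assoc] using (hsq.mul_prod hsq).const_mul (α i ^ 2)

lemma integral_sq_dotp_mul_gaussPi_prod (hα : ∀ i, 0 ≤ α i) :
    ∫ z, dotp (α * z.1) z.2 ^ 2 ∂((gaussPi d α).prod (gaussPi d α)) = ∑ i, α i ^ 4 := by
  have hslice (x : Fin d → ℝ) :
      ∫ y, dotp (α * x) y ^ 2 ∂(gaussPi d α) = ∑ i, α i ^ 3 * x i ^ 2 := by
    rw [← variance_of_integral_eq_zero (hasGaussianLaw_dotp_gaussPi _).aemeasurable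
      (integral_dotp_gaussPi _), variance_dotp_gaussPi hα]
    exact Finset.sum_congr rfl fun i _ => by simp only [Pi.mul_apply]; ring
  rw [integral_prod _ memLp_dotp_mul_gaussPi_prod.integrable_sq]
  simp only [hslice, integral_sum_mul_sq_gaussPi hα, ← pow_succ]

end QuadraticForm

section Triangle

variable {d : ℕ} {α : Fin d → ℝ} {t : ℝ}

/-- The pairs of points joined by an edge at threshold `t`. -/
def edgeEvent (d : ℕ) (t : ℝ) : Set ((Fin d → ℝ) × (Fin d → ℝ)) :=
  {z | t ≤ dotp z.1 z.2}

/-- The probability that two i.i.d. `N(0, D_α)` points are joined by an edge at threshold `t`. -/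
def edgeProb (d : ℕ) (α : Fin d → ℝ) (t : ℝ) : ℝ :=
  ((gaussPi d α).prod (gaussPi d α)).real (edgeEvent d t)

/-- The probability that an `N(0, D_α)` point is joined to `x`. -/
def neighborProb (α : Fin d → ℝ) (t : ℝ) (x : Fin d → ℝ) : ℝ :=
  (gaussPi d α).real {y | t ≤ dotp x y}

/-- The probability that an `N(0, D_α)` point is joined to both points of the pair `z`. -/
def commonNeighborProb (α : Fin d → ℝ) (t : ℝ) (z : (Fin d → ℝ) × (Fin d → ℝ)) : ℝ :=
  (gaussPi d α).real {y | t ≤ dotp z.1 y ∧ t ≤ dotp z.2 y}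

lemma IsThreshold.edgeProb_eq {p : ℝ} (h : IsThreshold d α p t) (hp : 0 ≤ p) :
    edgeProb d α t = p := by
  rw [edgeProb, measureReal_def, edgeEvent, h, ENNReal.toReal_ofReal hp]

lemma measurableSet_edgeEvent : MeasurableSet (edgeEvent d t) :=
  measurableSet_le measurable_const (by fun_prop)

lemma swap_preimage_edgeEvent : Prod.swap ⁻¹' edgeEvent d t = edgeEvent d t := by
  ext z
  simp [edgeEvent, dotp_comm z.1]

lemma measurable_neighborProb : Measurable (neighborProb α t) :=
  (measurable_measure_prodMk_left measurableSet_edgeEvent).ennreal_toReal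

lemma neighborProb_nonneg (x : Fin d → ℝ) : 0 ≤ neighborProb α t x := measureReal_nonneg

lemma neighborProb_le_one (x : Fin d → ℝ) : neighborProb α t x ≤ 1 := measureReal_le_one

lemma memLp_neighborProb (q : ℝ≥0∞) : MemLp (neighborProb α t) q (gaussPi d α) :=
  .of_bound measurable_neighborProb.aestronglyMeasurable 1 (.of_forall fun x =>
    (abs_of_nonneg (neighborProb_nonneg x)).trans_le (neighborProb_le_one x))

lemma edgeProb_eq_integral_neighborProb :
    edgeProb d α t = ∫ x, neighborProb α t x ∂(gaussPi d α) :=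
  measureReal_prod_eq_integral measurableSet_edgeEvent

lemma measurable_commonNeighborProb : Measurable (commonNeighborProb α t) :=
  (measurable_measure_prodMk_left ((measurableSet_le measurable_const (by fun_prop)).inter
    (measurableSet_le measurable_const (by fun_prop)) :
      MeasurableSet ({w : ((Fin d → ℝ) × (Fin d → ℝ)) × (Fin d → ℝ) | t ≤ dotp w.1.1 w.2} ∩
        {w | t ≤ dotp w.1.2 w.2}))).ennreal_toReal

lemma integrable_commonNeighborProb :
    Integrable (commonNeighborProb α t) ((gaussPi d α).prod (gaussPi d α)) :=
  .of_bound measurable_commonNeighborProb.aestronglyMeasurable 1 (.of_forall fun _ =>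
    (abs_of_nonneg measureReal_nonneg).trans_le measureReal_le_one)

lemma measurePreserving_sampleMeasure_three :
    MeasurePreserving (fun w : ((Fin d → ℝ) × (Fin d → ℝ)) × (Fin d → ℝ) => ![w.1.1, w.1.2, w.2])
      (((gaussPi d α).prod (gaussPi d α)).prod (gaussPi d α)) (sampleMeasure 3 d α) := by
  have hmeas : Measurable fun w : ((Fin d → ℝ) × (Fin d → ℝ)) × (Fin d → ℝ) =>
      ![w.1.1, w.1.2, w.2] := by
    refine measurable_pi_lambda _ fun i => ?_
    fin_cases i
    exacts [measurable_fst.fst, measurable_fst.snd, measurable_snd]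
  refine ⟨hmeas, (Measure.pi_eq fun s hs => ?_).symm⟩
  have hbox : (fun w : ((Fin d → ℝ) × (Fin d → ℝ)) × (Fin d → ℝ) => ![w.1.1, w.1.2, w.2]) ⁻¹'
      Set.univ.pi s = (s 0 ×ˢ s 1) ×ˢ s 2 := by
    ext w
    simp [Fin.forall_fin_succ, and_assoc]
  rw [Measure.map_apply hmeas (.univ_pi hs), hbox, Measure.prod_prod, Measure.prod_prod,
    Fin.prod_univ_three]

lemma measurableSet_triangle :
    MeasurableSet {X : Fin 3 → Fin d → ℝ |
      t ≤ dotp (X 0) (X 1) ∧ t ≤ dotp (X 0) (X 2) ∧ t ≤ dotp (X 1) (X 2)} := by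
  have hedge (i j : Fin 3) : MeasurableSet {X : Fin 3 → Fin d → ℝ | t ≤ dotp (X i) (X j)} :=
    measurableSet_le measurable_const (by fun_prop)
  exact (hedge 0 1).inter ((hedge 0 2).inter (hedge 1 2))

lemma triangleProb_eq_setIntegral_commonNeighborProb :
    triangleProb d α t =
      ∫ z in edgeEvent d t, commonNeighborProb α t z ∂((gaussPi d α).prod (gaussPi d α)) := by
  have hpreserving := measurePreserving_sampleMeasure_three (α := α)
  rw [triangleProb, ← measureReal_def,
    ← hpreserving.measureReal_preimage measurableSet_triangle.nullMeasurableSet,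
    measureReal_prod_eq_integral (hpreserving.measurable measurableSet_triangle),
    ← integral_indicator measurableSet_edgeEvent]
  refine integral_congr_ae (.of_forall fun z => ?_)
  by_cases hz : t ≤ dotp z.1 z.2 <;> simp [edgeEvent, commonNeighborProb, Set.indicator, hz]

/-- The squared deviation from the identity of the covariance matrix of `(⟨x, Z⟩, ⟨y, Z⟩)`, where
`z = (x, y)` and `Z ∼ N(0, D_α)`, the off-diagonal entry being counted once. -/
def covarianceDefect (α : Fin d → ℝ) (z : (Fin d → ℝ) × (Fin d → ℝ)) : ℝ :=
  dotp (α * z.1) z.2 ^ 2 + (dotp (α * z.1) z.1 - 1) ^ 2 + (dotp (α * z.2) z.2 - 1) ^ 2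

lemma covarianceDefect_nonneg (z : (Fin d → ℝ) × (Fin d → ℝ)) : 0 ≤ covarianceDefect α z := by
  unfold covarianceDefect
  positivity

lemma integrable_covarianceDefect :
    Integrable (covarianceDefect α) ((gaussPi d α).prod (gaussPi d α)) :=
  (memLp_dotp_mul_gaussPi_prod.integrable_sq.add
    (integrable_sq_dotp_mul_self_sub_one.comp_fst _)).add
      (integrable_sq_dotp_mul_self_sub_one.comp_snd _)

lemma integral_covarianceDefect (hα : ∀ i, 0 ≤ α i) (hsum : ∑ i, α i ^ 2 = 1) :
    ∫ z, covarianceDefect α z ∂((gaussPi d α).prod (gaussPi d α)) =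
      (1 + 2 * Var[fun y => y ^ 2; γ]) * ∑ i, α i ^ 4 := by
  have hcross := (memLp_dotp_mul_gaussPi_prod (α := α)).integrable_sq
  have hfst := (integrable_sq_dotp_mul_self_sub_one (α := α)).comp_fst (gaussPi d α)
  have hsnd := (integrable_sq_dotp_mul_self_sub_one (α := α)).comp_snd (gaussPi d α)
  unfold covarianceDefect
  rw [integral_add (by exact hcross.add hfst) hsnd, integral_add hcross hfst,
    integral_sq_dotp_mul_gaussPi_prod hα, integral_fun_fst (fun x => (dotp (α * x) x - 1) ^ 2),
    integral_fun_snd (fun x => (dotp (α * x) x - 1) ^ 2),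
    integral_sq_dotp_mul_self_sub_one hα hsum, probReal_univ, one_smul]
  ring

lemma commonNeighborProb_le (hα : ∀ i, 0 ≤ α i) (z : (Fin d → ℝ) × (Fin d → ℝ)) :
    commonNeighborProb α t z ≤ neighborProb α t z.1 * neighborProb α t z.2
      + φ t ^ 2 * dotp (α * z.1) z.2 + 22 * covarianceDefect α z := by
  have h := measureReal_setOf_le_and_le_le (hasGaussianLaw_dotp_prodMk_gaussPi (α := α) z.1 z.2)
    (integral_dotp_gaussPi _) (integral_dotp_gaussPi _) t t
  rw [covariance_dotp_gaussPi hα, variance_dotp_gaussPi hα, variance_dotp_gaussPi hα] at h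
  refine h.trans_eq ?_
  rw [mul_assoc (dotp (α * z.1) z.2), ← sq, mul_comm (dotp (α * z.1) z.2)]
  rfl

lemma integral_sq_neighborProb_sub_gaussianTail_le (hα : ∀ i, 0 ≤ α i)
    (hsum : ∑ i, α i ^ 2 = 1) :
    ∫ x, (neighborProb α t x - gaussianTail t) ^ 2 ∂(gaussPi d α) ≤
      16 * (Var[fun y => y ^ 2; γ] * ∑ i, α i ^ 4) := by
  rw [← integral_sq_dotp_mul_self_sub_one hα hsum, ← integral_const_mul]
  refine integral_mono ((memLp_neighborProb 2).sub (memLp_const _)).integrable_sq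
    (integrable_sq_dotp_mul_self_sub_one.const_mul 16) fun x => ?_
  have hdev : |neighborProb α t x - gaussianTail t| ≤ _ :=
    abs_measureReal_setOf_le_sub_gaussianTail_le (hasGaussianLaw_dotp_gaussPi (α := α) x)
      (integral_dotp_gaussPi x) t
  rw [variance_dotp_gaussPi hα] at hdev
  calc (neighborProb α t x - gaussianTail t) ^ 2
      ≤ (4 * |dotp (α * x) x - 1|) ^ 2 :=
        sq_le_sq.2 (hdev.trans (le_abs_self _))
    _ = 16 * (dotp (α * x) x - 1) ^ 2 := by rw [mul_pow, sq_abs]; norm_num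

lemma setIntegral_neighborProb_mul_le (hα : ∀ i, 0 ≤ α i)
    (hsum : ∑ i, α i ^ 2 = 1) :
    ∫ z in edgeEvent d t, neighborProb α t z.1 * neighborProb α t z.2
        ∂((gaussPi d α).prod (gaussPi d α)) ≤
      edgeProb d α t ^ 3 + 48 * Var[fun y => y ^ 2; γ] * ∑ i, α i ^ 4 := by
  calc ∫ z in edgeEvent d t, neighborProb α t z.1 * neighborProb α t z.2
        ∂((gaussPi d α).prod (gaussPi d α))
      ≤ ∫ x, neighborProb α t x * neighborProb α t x ^ 2 ∂(gaussPi d α) :=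
        setIntegral_mul_le_integral_mul_sq measurableSet_edgeEvent swap_preimage_edgeEvent
          (memLp_neighborProb 2)
    _ = ∫ x, neighborProb α t x ^ 3 ∂(gaussPi d α) := by simp only [← pow_succ']
    _ ≤ edgeProb d α t ^ 3
          + 3 * ∫ x, (neighborProb α t x - gaussianTail t) ^ 2 ∂(gaussPi d α) := by
        rw [edgeProb_eq_integral_neighborProb]
        exact integral_pow_three_le measurable_neighborProb.aestronglyMeasurable
          neighborProb_nonneg neighborProb_le_one _
    _ ≤ edgeProb d α t ^ 3 + 48 * Var[fun y => y ^ 2; γ] * ∑ i, α i ^ 4 := by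
        linarith [integral_sq_neighborProb_sub_gaussianTail_le (t := t) hα hsum]

lemma le_one_of_sum_sq_eq_one (hα : ∀ i, 0 ≤ α i) (hsum : ∑ i, α i ^ 2 = 1) (i : Fin d) :
    α i ≤ 1 :=
  (sq_le_one_iff₀ (hα i)).1 <|
    hsum ▸ Finset.single_le_sum (fun j _ => sq_nonneg (α j)) (Finset.mem_univ i)

lemma abs_setIntegral_setOf_le_dotp_mul_le (hα : ∀ i, 0 ≤ α i) (hα1 : ∀ i, α i ≤ 1)
    (x : Fin d → ℝ) :
    |∫ y in {y | t ≤ dotp x y}, dotp (α * x) y ∂(gaussPi d α)| ≤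
      2 * ∑ i, α i ^ 2 * x i ^ 2 + 4 * (dotp (α * x) x - 1) ^ 2 := by
  have hcov : dotp (α * x) (α * x) = ∑ i, α i ^ 2 * x i ^ 2 :=
    Finset.sum_congr rfl fun i _ => by rw [Pi.mul_apply]; ring
  have hcov0 : 0 ≤ dotp (α * x) (α * x) := Finset.sum_nonneg fun i _ => mul_self_nonneg _
  have hvar : dotp (α * (α * x)) (α * x) ≤ dotp (α * x) x := by
    simp only [dotp_mul_self, Pi.mul_apply]
    refine Finset.sum_le_sum fun i _ => mul_le_mul_of_nonneg_left ?_ (hα i)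
    rw [mul_pow]
    exact mul_le_of_le_one_left (sq_nonneg _) (pow_le_one₀ (hα i) (hα1 i))
  have h := abs_setIntegral_setOf_le_le
    (hasGaussianLaw_dotp_prodMk_gaussPi (α := α) x (α * x)) (by fun_prop)
    (integral_dotp_gaussPi _) (integral_dotp_gaussPi _)
    (by rwa [variance_dotp_gaussPi hα, variance_dotp_gaussPi hα]) t
  rwa [covariance_dotp_gaussPi hα, variance_dotp_gaussPi hα, abs_of_nonneg hcov0, hcov] at h

lemma setIntegral_edgeEvent_dotp_mul_le (hα : ∀ i, 0 ≤ α i) (hsum : ∑ i, α i ^ 2 = 1) :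
    ∫ z in edgeEvent d t, dotp (α * z.1) z.2 ∂((gaussPi d α).prod (gaussPi d α)) ≤
      2 * ∑ i, α i ^ 3 + 4 * Var[fun y => y ^ 2; γ] * ∑ i, α i ^ 4 := by
  have hquad := ((memLp_sum_mul_sq_gaussPi (α := α) (fun i => α i ^ 2)).integrable
    one_le_two).const_mul 2
  have hdev := (integrable_sq_dotp_mul_self_sub_one (α := α)).const_mul 4
  have hbound : Integrable (fun x : Fin d → ℝ =>
      2 * ∑ i, α i ^ 2 * x i ^ 2 + 4 * (dotp (α * x) x - 1) ^ 2) (gaussPi d α) := hquad.add hdev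
  rw [setIntegral_prod_eq_integral_setIntegral_preimage measurableSet_edgeEvent
    (memLp_dotp_mul_gaussPi_prod.integrable one_le_two).integrableOn]
  calc ∫ x, ∫ y in {y | t ≤ dotp x y}, dotp (α * x) y ∂(gaussPi d α) ∂(gaussPi d α)
      ≤ ∫ x, (2 * ∑ i, α i ^ 2 * x i ^ 2 + 4 * (dotp (α * x) x - 1) ^ 2) ∂(gaussPi d α) :=
        (le_norm_self _).trans (norm_integral_le_of_norm_le hbound (.of_forall
          (abs_setIntegral_setOf_le_dotp_mul_le hα (le_one_of_sum_sq_eq_one hα hsum))))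
    _ = 2 * ∑ i, α i ^ 3 + 4 * Var[fun y => y ^ 2; γ] * ∑ i, α i ^ 4 := by
        rw [integral_add hquad hdev, integral_const_mul, integral_const_mul,
          integral_sum_mul_sq_gaussPi hα, integral_sq_dotp_mul_self_sub_one hα hsum, mul_assoc]
        simp only [← pow_succ]

lemma setIntegral_covarianceDefect_le (hα : ∀ i, 0 ≤ α i) (hsum : ∑ i, α i ^ 2 = 1) :
    ∫ z in edgeEvent d t, covarianceDefect α z ∂((gaussPi d α).prod (gaussPi d α)) ≤
      (1 + 2 * Var[fun y => y ^ 2; γ]) * ∑ i, α i ^ 4 :=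
  (setIntegral_le_integral integrable_covarianceDefect
    (.of_forall covarianceDefect_nonneg)).trans_eq (integral_covarianceDefect hα hsum)

lemma triangleProb_le_integral_add (hα : ∀ i, 0 ≤ α i) :
    triangleProb d α t ≤
      (∫ z in edgeEvent d t, neighborProb α t z.1 * neighborProb α t z.2
          ∂((gaussPi d α).prod (gaussPi d α)))
        + φ t ^ 2 * (∫ z in edgeEvent d t, dotp (α * z.1) z.2
          ∂((gaussPi d α).prod (gaussPi d α)))
        + 22 * ∫ z in edgeEvent d t, covarianceDefect α z
          ∂((gaussPi d α).prod (gaussPi d α)) := by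
  set μ := (gaussPi d α).prod (gaussPi d α)
  have hprod : Integrable (fun z => neighborProb α t z.1 * neighborProb α t z.2) μ :=
    ((memLp_neighborProb 1).integrable le_rfl).mul_prod ((memLp_neighborProb 1).integrable le_rfl)
  have hcross : Integrable (fun z => φ t ^ 2 * dotp (α * z.1) z.2) μ :=
    (memLp_dotp_mul_gaussPi_prod.integrable one_le_two).const_mul _
  have hmain : Integrable (fun z => neighborProb α t z.1 * neighborProb α t z.2
      + φ t ^ 2 * dotp (α * z.1) z.2) μ := hprod.add hcross
  have hdefect : Integrable (fun z => 22 * covarianceDefect α z) μ :=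
    integrable_covarianceDefect.const_mul 22
  rw [triangleProb_eq_setIntegral_commonNeighborProb, ← integral_const_mul, ← integral_const_mul,
    ← integral_add hprod.integrableOn hcross.integrableOn,
    ← integral_add hmain.integrableOn hdefect.integrableOn]
  exact setIntegral_mono integrable_commonNeighborProb.integrableOn
    (hmain.add hdefect).integrableOn (commonNeighborProb_le hα)

lemma triangleProb_le (hα : ∀ i, 0 ≤ α i) (hsum : ∑ i, α i ^ 2 = 1) :
    triangleProb d α t ≤ edgeProb d α t ^ 3
      + (24 + 96 * Var[fun y => y ^ 2; γ]) * ∑ i, α i ^ 3 := by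
  set κ := Var[fun y => y ^ 2; γ]
  have hκ : 0 ≤ κ := variance_nonneg _ _
  have hS₃ : 0 ≤ ∑ i, α i ^ 3 := Finset.sum_nonneg fun i _ => pow_nonneg (hα i) 3
  have hS₄₃ : ∑ i, α i ^ 4 ≤ ∑ i, α i ^ 3 := Finset.sum_le_sum fun i _ =>
    pow_le_pow_of_le_one (hα i) (le_one_of_sum_sq_eq_one hα hsum i) (by norm_num)
  have hφ : φ t ^ 2 ≤ 1 :=
    pow_le_one₀ (gaussianPDFReal_nonneg 0 1 t) ((gaussianPDFReal_std_le_half t).trans (by norm_num))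
  have hcross : φ t ^ 2 * (∫ z in edgeEvent d t, dotp (α * z.1) z.2
      ∂((gaussPi d α).prod (gaussPi d α))) ≤ 2 * ∑ i, α i ^ 3 + 4 * κ * ∑ i, α i ^ 4 :=
    (mul_le_mul_of_nonneg_left (setIntegral_edgeEvent_dotp_mul_le hα hsum) (sq_nonneg _)).trans
      (mul_le_of_le_one_left (by positivity) hφ)
  calc triangleProb d α t
      ≤ (edgeProb d α t ^ 3 + 48 * κ * ∑ i, α i ^ 4)
        + (2 * ∑ i, α i ^ 3 + 4 * κ * ∑ i, α i ^ 4) + 22 * ((1 + 2 * κ) * ∑ i, α i ^ 4) := by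
        refine (triangleProb_le_integral_add hα).trans ?_
        gcongr
        · exact setIntegral_neighborProb_mul_le hα hsum
        · exact setIntegral_covarianceDefect_le hα hsum
    _ = edgeProb d α t ^ 3 + 2 * ∑ i, α i ^ 3 + (22 + 96 * κ) * ∑ i, α i ^ 4 := by ring
    _ ≤ edgeProb d α t ^ 3 + 2 * ∑ i, α i ^ 3 + (22 + 96 * κ) * ∑ i, α i ^ 3 := by gcongr
    _ = edgeProb d α t ^ 3 + (24 + 96 * κ) * ∑ i, α i ^ 3 := by ring

end Triangle

section Scaling

variable {d : ℕ} {c : ℝ}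

lemma gaussPi_smul (hc : 0 ≤ c) (α : Fin d → ℝ) :
    gaussPi d (c • α) = (gaussPi d α).map (√c • ·) := by
  refine Eq.trans ?_ (Measure.pi_map_pi fun i => (measurable_const_mul √c).aemeasurable).symm
  rw [gaussPi]
  congr 1
  ext1 i
  rw [gaussianReal_map_const_mul, mul_zero, Pi.smul_apply, smul_eq_mul, Real.toNNReal_mul hc]
  congr 2
  ext
  simp [hc]

lemma sampleMeasure_smul (hc : 0 ≤ c) (n : ℕ) (α : Fin d → ℝ) :
    sampleMeasure n d (c • α) = (sampleMeasure n d α).map (√c • ·) := by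
  refine Eq.trans ?_
    (Measure.pi_map_pi fun _ => (measurable_const_smul (α := Fin d → ℝ) √c).aemeasurable).symm
  simp only [sampleMeasure, gaussPi_smul hc]

lemma edgeProb_smul (hc : 0 < c) (α : Fin d → ℝ) (t : ℝ) :
    edgeProb d (c • α) (c * t) = edgeProb d α t := by
  rw [edgeProb, gaussPi_smul hc.le, Measure.map_prod_map _ _ (measurable_const_smul _)
    (measurable_const_smul _), map_measureReal_apply (by fun_prop) measurableSet_edgeEvent,
    edgeProb]
  congr 1
  ext z
  simp [edgeEvent, dotp_smul_smul, hc.le, hc]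

lemma triangleProb_smul (hc : 0 < c) (α : Fin d → ℝ) (t : ℝ) :
    triangleProb d (c • α) (c * t) = triangleProb d α t := by
  rw [triangleProb, sampleMeasure_smul hc.le,
    Measure.map_apply (measurable_const_smul _) measurableSet_triangle, triangleProb]
  congr 2
  ext X
  simp [dotp_smul_smul, hc.le, hc]

lemma nrm_smul {q : ℕ} (hq : q ≠ 0) (hc : 0 ≤ c) {α : Fin d → ℝ} (hα : ∀ i, 0 ≤ α i) :
    nrm q (c • α) = c * nrm q α := by
  simp only [nrm, Pi.smul_apply, smul_eq_mul, mul_pow, ← Finset.mul_sum]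
  rw [mul_rpow (pow_nonneg hc q) (Finset.sum_nonneg fun i _ => pow_nonneg (hα i) q), one_div,
    pow_rpow_inv_natCast hc hq]

lemma nrm_pow {q : ℕ} (hq : q ≠ 0) {α : Fin d → ℝ} (hα : ∀ i, 0 ≤ α i) :
    nrm q α ^ q = ∑ i, α i ^ q := by
  rw [nrm, one_div, rpow_inv_natCast_pow (Finset.sum_nonneg fun i _ => pow_nonneg (hα i) q) hq]

lemma nrm_pos {q : ℕ} {α : Fin d → ℝ} (hα : ∀ i, 0 ≤ α i) (hα0 : α ≠ 0) : 0 < nrm q α := by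
  obtain ⟨i, hi⟩ := Function.ne_iff.1 hα0
  exact rpow_pos_of_pos (Finset.sum_pos' (fun j _ => pow_nonneg (hα j) q)
    ⟨i, Finset.mem_univ i, pow_pos ((hα i).lt_of_ne' hi) q⟩) _

end Scaling

theorem triangleProb_upper_bound_general :
    ∃ Δ > (0 : ℝ), ∀ (d : ℕ) (α : Fin d → ℝ), (∀ i, 0 ≤ α i) → α ≠ 0 → ∀ t : ℝ,
      triangleProb d α t - edgeProb d α t ^ 3 ≤ Δ * (nrm 3 α / nrm 2 α) ^ 3 := by
  have hκ : 0 ≤ Var[fun y => y ^ 2; γ] := variance_nonneg _ _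
  refine ⟨24 + 96 * Var[fun y => y ^ 2; γ], by positivity, fun d α hα hα0 t => ?_⟩
  have hnrm : 0 < nrm 2 α := nrm_pos hα hα0
  set c := (nrm 2 α)⁻¹
  have hc : 0 < c := inv_pos.2 hnrm
  have hcα (i : Fin d) : 0 ≤ (c • α) i := mul_nonneg hc.le (hα i)
  have hsum : ∑ i, (c • α) i ^ 2 = 1 := by
    rw [← nrm_pow two_ne_zero hcα, nrm_smul two_ne_zero hc.le hα, inv_mul_cancel₀ hnrm.ne',
      one_pow]
  have hbound := triangleProb_le (t := c * t) hcα hsum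
  rw [triangleProb_smul hc, edgeProb_smul hc, ← nrm_pow three_ne_zero hcα,
    nrm_smul three_ne_zero hc.le hα, ← div_eq_inv_mul] at hbound
  linarith

/-- Lemma 7. There is a universal constant `Δ > 0` such that for every
`p ∈ (0,1)` and every `α` with entries in `[0,1]` and some entry equal to `1`,
`ℙ(E_p) - p³ ≤ Δ (‖α‖₃/‖α‖₂)³`. -/
theorem triangleProb_upper_bound :
    ∃ Δ > (0 : ℝ), ∀ p : ℝ, p ∈ Set.Ioo (0 : ℝ) 1 →
      ∀ (d : ℕ) (α : Fin d → ℝ),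
        (∀ i, α i ∈ Set.Icc (0 : ℝ) 1) → (∃ i, α i = 1) →
        ∀ t : ℝ, IsThreshold d α p t →
          triangleProb d α t - p ^ 3 ≤ Δ * (nrm 3 α / nrm 2 α) ^ 3 := by
  obtain ⟨Δ, hΔ, hbound⟩ := triangleProb_upper_bound_general
  refine ⟨Δ, hΔ, fun p hp d α hα ⟨i, hi⟩ t ht => ?_⟩
  rw [← ht.edgeProb_eq hp.1.le]
  exact hbound d α (fun i => (hα i).1) (fun h => by simp [h] at hi) t

end
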